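/- arXiv:1806.01835 — 2 statements merged into one kernel-verified Lean document; each statement's English description precedes it below -/
import Mathlib

section
/- Two tropical polynomials with trivial (zero) coefficients define the same piecewise-linear function from ℝ^m to ℝ if and only if their Newton polytopes (the convex hulls of their support sets) are equal. -/
/-!
The function `tropEval I` is the support function of the Newton polytope of `I`. The theorem follows
by antisymmetry from an order version, `newtonPolytope_subset_iff`: one Newton polytope lies in
another iff the corresponding tropical functions are pointwise comparable. If `conv I ⊆ conv J`,
then any open half-space containing `J` contains `conv J`, hence `I`, so the support function of `J`
dominates. Conversely, a point of `I` outside the compact convex set `conv J` is strictly separated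
from it by a linear functional (Hahn–Banach), and the coordinate vector of this functional is a
point at which `tropEval J < tropEval I`. Neither argument needs the supports to be nonempty.
-/

/-- The (max-plus) tropical polynomial function with trivial coefficients and
support `I ⊆ ℕ^m`, as a function `ℝ^m → ℝ ∪ {-∞}` (value `⊥` when `I = ∅`). -/
noncomputable def tropEval {m : ℕ} (I : Finset (Fin m → ℕ)) (x : Fin m → ℝ) : EReal :=
  ⨆ a ∈ I, ((∑ i, (a i : ℝ) * x i : ℝ) : EReal)

/-- The Newton polytope of a tropical polynomial with trivial coefficients:
the convex hull of its support, viewed inside `ℝ^m`. -/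
noncomputable def newtonPolytope {m : ℕ} (I : Finset (Fin m → ℕ)) : Set (Fin m → ℝ) :=
  convexHull ℝ ((fun a : Fin m → ℕ => fun i => (a i : ℝ)) '' (I : Set (Fin m → ℕ)))

lemma newtonPolytope_subset_iff {m : ℕ} (I J : Finset (Fin m → ℕ)) :
    newtonPolytope I ⊆ newtonPolytope J ↔ ∀ x : Fin m → ℝ, tropEval I x ≤ tropEval J x := by
  constructor
  · intro h x
    refine iSup₂_le fun a ha => ?_
    by_contra! hlt
    -- The open half-space `{y | ⟨y, x⟩ < ⟨a, x⟩}` contains `J`, hence its convex hull, hence `a`.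
    have hconv : Convex ℝ {y : Fin m → ℝ | ∑ i, y i * x i < ∑ i, (a i : ℝ) * x i} := by
      refine convex_halfSpace_lt ⟨fun y z => ?_, fun c y => ?_⟩ _
      · simp [add_mul, Finset.sum_add_distrib]
      · simp [Finset.mul_sum, mul_assoc]
    have hsub : newtonPolytope J ⊆ {y | ∑ i, y i * x i < ∑ i, (a i : ℝ) * x i} := by
      refine convexHull_min ?_ hconv
      rintro _ ⟨b, hb, rfl⟩
      exact EReal.coe_lt_coe_iff.1 ((le_iSup₂ (f := fun (a : Fin m → ℕ) (_ : a ∈ J) =>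
        ((∑ i, (a i : ℝ) * x i : ℝ) : EReal)) b hb).trans_lt hlt)
    have hlt' : ∑ i, (a i : ℝ) * x i < ∑ i, (a i : ℝ) * x i :=
      hsub (h (subset_convexHull ℝ _ ⟨a, ha, rfl⟩))
    exact lt_irrefl _ hlt'
  · intro h
    refine convexHull_min ?_ (convex_convexHull ℝ _)
    rintro _ ⟨a, ha, rfl⟩
    by_contra hnot
    have hclosed : IsClosed (newtonPolytope J) :=
      (J.finite_toSet.image _).isClosed_convexHull ℝ
    obtain ⟨f, u, hfJ, hfa⟩ :=
      geometric_hahn_banach_closed_point (convex_convexHull ℝ _) hclosed hnot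
    have hf : ∀ y : Fin m → ℝ, f y = ∑ i, y i * f (Pi.single i 1) := fun y => by
      conv_lhs => rw [pi_eq_sum_univ' y]
      simp [map_sum]
    have hJ : tropEval J (fun i => f (Pi.single i 1)) ≤ (u : EReal) := by
      refine iSup₂_le fun b hb => EReal.coe_le_coe_iff.2 ?_
      have := hfJ _ (subset_convexHull ℝ _ ⟨b, hb, rfl⟩)
      rw [hf] at this
      exact this.le
    have hI := le_iSup₂ (f := fun (a : Fin m → ℕ) (_ : a ∈ I) =>
      ((∑ i, (a i : ℝ) * f (Pi.single i 1) : ℝ) : EReal)) a ha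
    rw [hf] at hfa
    exact absurd (EReal.coe_le_coe_iff.1 ((hI.trans (h _)).trans hJ)) (not_le.2 hfa)

/-- Two tropical polynomials with trivial coefficients define the same
piecewise-linear function on `ℝ^m` iff their Newton polytopes coincide. -/
theorem tropical_trivial_coeff_eq_iff_newton_eq {m : ℕ} (I J : Finset (Fin m → ℕ)) :
    (∀ x : Fin m → ℝ, tropEval I x = tropEval J x) ↔ newtonPolytope I = newtonPolytope J := by
  rw [Set.Subset.antisymm_iff, newtonPolytope_subset_iff, newtonPolytope_subset_iff,
    ← forall_and]
  exact forall_congr' fun x => le_antisymm_iff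
end

section
/- Let w be a word over a finite alphabet Σ in which each letter occurs in at most two distinct blocks (maximal runs of a single letter). Then w is an isoterm for UT_2: if w ∼_2 v then v = w. -/
/-!
Evaluating the identity `w = v` at the matrices `[[a t, b t], [-∞, 0]]`, with `a t = α` for `t = s`
and `a t = β` otherwise, and `b` equal to `0` at `s` and to `-∞` elsewhere, compares, for each
letter `s`, the maxima of `α * C + β * G` over the occurrences of `s` in `w` and in `v`. Here an
occurrence is a factorization `x ++ s :: y`, `C` is the number of letters `s` in `x`, and `G` is the
number of other letters in `x`; so `C + G` is the position of the occurrence.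

If `s` has at most two blocks in `w`, then `G` takes at most two values on its occurrences, and so
every occurrence of `s` in `w` minimizes or maximizes `G` (`min_or_max`). If an occurrence `(C, G)`
in `w` minimizes `G`, the functional `C - N * G` with `N` large yields an occurrence `(C', G)` in
`v` with `C ≤ C'`, while `G` is also the minimum in `v`. As `G` is monotone along `v`, the
occurrence in `v` with `C` letters `s` before it has the same `G`, hence the same position as the
one in `w`. The maximizing case is dual. Thus `v` carries the letter `s` wherever `w` does
(`occurrence_transfer`), and the two words have the same length.
-/

/-- Tropical (max-plus) matrix multiplication over `ℝ ∪ {-∞}`. -/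
noncomputable def tmul {n : ℕ} (A B : Matrix (Fin n) (Fin n) EReal) :
    Matrix (Fin n) (Fin n) EReal :=
  fun i j => ⨆ k, A i k + B k j

/-- The tropical identity matrix: `0` on the diagonal, `-∞` elsewhere. -/
noncomputable def tOne {n : ℕ} : Matrix (Fin n) (Fin n) EReal :=
  fun i j => if i = j then 0 else ⊥

/-- Tropical product of a list of matrices. -/
noncomputable def tProd {n : ℕ} (l : List (Matrix (Fin n) (Fin n) EReal)) :
    Matrix (Fin n) (Fin n) EReal :=
  l.foldr tmul tOne

/-- A matrix is upper triangular if all entries below the diagonal are `-∞`. -/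
def IsUT {n : ℕ} (A : Matrix (Fin n) (Fin n) EReal) : Prop :=
  ∀ i j : Fin n, j < i → A i j = ⊥

/-- `w = v` is a semigroup identity for `UT_n`: every assignment of upper
triangular tropical matrices to the letters gives equal products. -/
noncomputable def UTId (n : ℕ) {σ : Type*} (w v : List σ) : Prop :=
  ∀ φ : σ → Matrix (Fin n) (Fin n) EReal, (∀ s, IsUT (φ s)) →
    tProd (w.map φ) = tProd (v.map φ)


/-- The list of blocks (maximal runs) of `w`, each represented by its letter:
collapsing each maximal run to a single letter. -/
def blockList {σ : Type*} [DecidableEq σ] (w : List σ) : List σ :=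
  w.destutter (· ≠ ·)

section Isoterm

lemma UTId.symm' {σ : Type*} {w v : List σ} (h : UTId 2 w v) : UTId 2 v w :=
  fun φ hφ => (h φ hφ).symm

variable {σ : Type*} [DecidableEq σ]

/-! ### Tropical evaluation -/

/-- The weight `α * C + β * G` of a word: the letter `s` weighs `α` and the other letters weigh `β`. -/
def wt (s : σ) (α β : ℤ) (x : List σ) : ℤ :=
  α * x.count s + β * (x.length - x.count s)

/-- The test matrices: the weight `α` or `β` at the top left, `0` at the bottom right, and the top
right entry marks the letter `s`. -/
noncomputable def testMat (s : σ) (α β : ℤ) (t : σ) : Matrix (Fin 2) (Fin 2) EReal :=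
  !![((((if t = s then α else β : ℤ) : ℝ)) : EReal), if t = s then 0 else ⊥; ⊥, 0]

lemma testMat_isUT (s : σ) (α β : ℤ) (t : σ) : IsUT (testMat s α β t) := by
  intro i j hij
  fin_cases i <;> fin_cases j <;> simp_all [testMat]

lemma tmul_two (A B : Matrix (Fin 2) (Fin 2) EReal) (i j : Fin 2) :
    tmul A B i j = (A i 0 + B 0 j) ⊔ (A i 1 + B 1 j) := by
  unfold tmul
  apply le_antisymm
  · apply iSup_le
    intro k
    fin_cases k
    · exact le_sup_left
    · exact le_sup_right
  · exact sup_le (le_iSup (fun k => A i k + B k j) 0) (le_iSup (fun k => A i k + B k j) 1)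

lemma wt_nil (s : σ) (α β : ℤ) : wt s α β [] = 0 := by simp [wt]

lemma wt_cons (s : σ) (α β : ℤ) (t : σ) (x : List σ) :
    wt s α β (t :: x) = (if t = s then α else β) + wt s α β x := by
  by_cases h : t = s
  · subst h
    simp [wt]
    ring
  · simp [wt, h]
    ring

lemma tProd_cons (s : σ) (α β : ℤ) (t : σ) (l : List σ) :
    tProd ((t :: l).map (testMat s α β)) =
      tmul (testMat s α β t) (tProd (l.map (testMat s α β))) := rfl

lemma tProd_lower (s : σ) (α β : ℤ) (l : List σ) :
    tProd (l.map (testMat s α β)) 1 0 = ⊥ ∧ tProd (l.map (testMat s α β)) 1 1 = 0 := by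
  induction l with
  | nil => simp [tProd, tOne]
  | cons t l ih =>
    rw [tProd_cons, tmul_two, tmul_two, ih.1, ih.2]
    simp [testMat]

lemma tProd_00 (s : σ) (α β : ℤ) (l : List σ) :
    tProd (l.map (testMat s α β)) 0 0 = ((wt s α β l : ℝ) : EReal) := by
  induction l with
  | nil => simp [tProd, tOne, wt_nil]
  | cons t l ih =>
    rw [tProd_cons, tmul_two, ih, (tProd_lower s α β l).1, wt_cons, Int.cast_add, EReal.coe_add]
    simp [testMat]

lemma tProd_01_cons (s : σ) (α β : ℤ) (t : σ) (l : List σ) :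
    tProd ((t :: l).map (testMat s α β)) 0 1 =
      (((if t = s then α else β : ℤ) : ℝ) + tProd (l.map (testMat s α β)) 0 1) ⊔
        (if t = s then 0 else ⊥) := by
  rw [tProd_cons, tmul_two, (tProd_lower s α β l).2]
  simp [testMat]

lemma wt_le_tProd (s : σ) (α β : ℤ) (x y : List σ) :
    ((wt s α β x : ℝ) : EReal) ≤ tProd ((x ++ s :: y).map (testMat s α β)) 0 1 := by
  induction x with
  | nil =>
    rw [List.nil_append, tProd_01_cons]
    simp [wt_nil]
  | cons t x ih =>
    rw [List.cons_append, tProd_01_cons, wt_cons, Int.cast_add, EReal.coe_add]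
    exact le_sup_of_le_left (add_le_add le_rfl ih)

/-- With `wt_le_tProd`: the top right entry of the product is the maximal weight of the prefixes
preceding an occurrence of `s`, and `-∞` if there is none. -/
lemma tProd_attained (s : σ) (α β : ℤ) (l : List σ) :
    tProd (l.map (testMat s α β)) 0 1 = ⊥ ∨ ∃ x y, l = x ++ s :: y ∧
      tProd (l.map (testMat s α β)) 0 1 = ((wt s α β x : ℝ) : EReal) := by
  induction l with
  | nil => left; simp [tProd, tOne]
  | cons t l ih =>
    rw [tProd_01_cons]
    rcases le_total ((((if t = s then α else β : ℤ) : ℝ) : EReal) +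
        tProd (l.map (testMat s α β)) 0 1) (if t = s then 0 else ⊥) with h | h
    · rw [sup_eq_right.2 h]
      by_cases hts : t = s
      · right
        exact ⟨[], l, by simp [hts], by simp [hts, wt_nil]⟩
      · left; simp [hts]
    · rw [sup_eq_left.2 h]
      rcases ih with ih | ⟨x, y, rfl, ih⟩
      · left; rw [ih, EReal.add_bot]
      · right
        refine ⟨t :: x, y, rfl, ?_⟩
        rw [ih, wt_cons, Int.cast_add, EReal.coe_add]

/-- Every linear functional has maximum over the occurrences of `s` in `v` at least that in `w`. -/
lemma exists_wt_le {w v : List σ} (h : UTId 2 w v) (s : σ) (α β : ℤ) {x y : List σ}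
    (hx : w = x ++ s :: y) : ∃ x' y', v = x' ++ s :: y' ∧ wt s α β x ≤ wt s α β x' := by
  have h1 := wt_le_tProd s α β x y
  rw [← hx, h _ (testMat_isUT s α β)] at h1
  rcases tProd_attained s α β v with h2 | ⟨x', y', hv, h2⟩
  · rw [h2] at h1
    exact absurd (le_bot_iff.1 h1) (EReal.coe_ne_bot _)
  · rw [h2] at h1
    exact ⟨x', y', hv, by exact_mod_cast h1⟩

lemma wt_eq {w v : List σ} (h : UTId 2 w v) (s : σ) (α β : ℤ) : wt s α β w = wt s α β v := by
  have h1 := congrFun (congrFun (h _ (testMat_isUT s α β)) 0) 0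
  rw [tProd_00, tProd_00] at h1
  exact_mod_cast h1

/-! ### Blocks -/

/-- A letter other than `s` separates the blocks of `s` on its left from those on its right. -/
lemma count_destutter'_append {s c : σ} (hc : c ≠ s) (a : σ) (u z : List σ) :
    (u.destutter' (· ≠ ·) a).count s + (z.destutter' (· ≠ ·) c).count s ≤
      ((u ++ c :: z).destutter' (· ≠ ·) a).count s := by
  induction u generalizing a with
  | nil =>
    by_cases hac : a = c
    · subst hac
      simp [List.destutter', hc]
    · simp [List.destutter', hac, List.count_cons, List.count_nil]
      omega
  | cons b u ih =>
    by_cases hab : a = b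
    · subst hab
      simpa [List.destutter'] using ih a
    · have := ih b
      simp [List.destutter', hab, List.count_cons] at this ⊢
      omega

lemma count_destutter'_pos {s a : σ} {z : List σ} (h : s ∈ a :: z) :
    1 ≤ (z.destutter' (· ≠ ·) a).count s := by
  induction z generalizing a with
  | nil =>
    have : s = a := by simpa using h
    simp [List.destutter', this]
  | cons b z ih =>
    by_cases hab : a = b
    · subst hab
      simpa [List.destutter'] using ih (a := a) (by simpa using h)
    · by_cases hs : s = a
      · subst hs
        simp [List.destutter', hab]
      · have := ih (a := b) (by simpa [hs] using h)
        simp only [ne_eq] at this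
        simp only [List.destutter', ne_eq, hab, not_false_eq_true, if_true, List.count_cons]
        omega

/-- Three occurrences of `s` separated by other letters lie in three different blocks. -/
lemma three_blocks {s c d : σ} (hc : c ≠ s) (hd : d ≠ s) {u₁ u₂ u₃ : List σ}
    (h₁ : s ∈ u₁) (h₂ : s ∈ u₂) (h₃ : s ∈ u₃) :
    3 ≤ (blockList (u₁ ++ c :: (u₂ ++ d :: u₃))).count s := by
  cases u₁ with
  | nil => simp at h₁
  | cons a u =>
    have e1 := count_destutter'_append hc a u (u₂ ++ d :: u₃)
    have e2 := count_destutter'_append hd c u₂ u₃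
    have p1 := count_destutter'_pos h₁
    have p2 := count_destutter'_pos (List.mem_cons_of_mem c h₂)
    have p3 := count_destutter'_pos (List.mem_cons_of_mem d h₃)
    change 3 ≤ ((u ++ c :: (u₂ ++ d :: u₃)).destutter' (· ≠ ·) a).count s
    omega

/-! ### Occurrences of a letter -/

/-- If `G` increases between two occurrences of `s`, they are separated by some letter `c ≠ s`. -/
lemma separated {s : σ} {x x' y y' : List σ} (h : x ++ s :: y = x' ++ s :: y')
    (hlt : x.length - x.count s < x'.length - x'.count s) :
    ∃ c z₁ z₂, c ≠ s ∧ x' = x ++ s :: (z₁ ++ c :: z₂) := by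
  have hle := x.count_le_length (a := s)
  rcases List.append_eq_append_iff.1 h with ⟨z, rfl, h2⟩ | ⟨z, rfl, -⟩
  · cases z with
    | nil => simp at hlt
    | cons t z =>
      obtain ⟨rfl, rfl⟩ : s = t ∧ y = z ++ s :: y' := by simpa using h2
      have hz : ∃ c ∈ z, c ≠ s := by
        by_contra! hall
        have : z.count s = z.length := List.count_eq_length.2 fun b hb => (hall b hb).symm
        simp at hlt
        omega
      obtain ⟨c, hcz, hc⟩ := hz
      obtain ⟨z₁, z₂, rfl⟩ := List.append_of_mem hcz
      exact ⟨c, z₁, z₂, hc, rfl⟩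
  · have := z.count_le_length (a := s)
    have := x'.count_le_length (a := s)
    simp at hlt
    omega

/-- With at most two blocks of `s`, each occurrence minimizes or maximizes `G`. -/
lemma min_or_max {s : σ} {w x y : List σ} (hb : (blockList w).count s ≤ 2)
    (hx : w = x ++ s :: y) :
    (∀ x' y', w = x' ++ s :: y' → x.length - x.count s ≤ x'.length - x'.count s) ∨
    (∀ x' y', w = x' ++ s :: y' → x'.length - x'.count s ≤ x.length - x.count s) := by
  by_contra! hcon
  obtain ⟨⟨x₁, y₁, h₁, l₁⟩, x₂, y₂, h₂, l₂⟩ := hcon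
  obtain ⟨c, p, q, hc, rfl⟩ := separated (h₁.symm.trans hx) l₁
  obtain ⟨d, p', q', hd, rfl⟩ := separated (hx.symm.trans h₂) l₂
  have := three_blocks (s := s) hc hd (u₁ := x₁ ++ s :: p) (u₂ := q ++ s :: p')
    (u₃ := q' ++ s :: y₂) (by simp) (by simp) (by simp)
  rw [h₂] at hb
  simp only [List.append_assoc, List.cons_append] at this hb
  omega

/-- Along the occurrences of `s` in `v`, the coordinate `C` takes each value below `v.count s`. -/
lemma exists_occurrence {s : σ} {v : List σ} {n : ℕ} (h : n < v.count s) :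
    ∃ x y, v = x ++ s :: y ∧ x.count s = n := by
  induction v generalizing n with
  | nil => simp at h
  | cons t v ih =>
    by_cases hts : t = s
    · subst hts
      cases n with
      | zero => exact ⟨[], v, rfl, rfl⟩
      | succ n =>
        obtain ⟨x, y, rfl, hx⟩ := ih (n := n) (by simpa using h)
        exact ⟨t :: x, y, rfl, by simp [hx]⟩
    · obtain ⟨x, y, rfl, hx⟩ := ih (n := n) (by simpa [hts] using h)
      exact ⟨t :: x, y, rfl, by simp [hx, hts]⟩

/-- The coordinates `C` and `G` are both monotone along the occurrences of `s`. -/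
lemma occurrence_mono {s : σ} {x x' y y' : List σ} (h : x ++ s :: y = x' ++ s :: y')
    (hc : x.count s ≤ x'.count s) : x.length - x.count s ≤ x'.length - x'.count s := by
  by_contra! hlt
  obtain ⟨c, p, q, -, rfl⟩ := separated h.symm hlt
  simp at hc

/-- Every occurrence of `s` in `w` is matched by one in `v` at the same position. -/
lemma occurrence_transfer {w v : List σ} (h : UTId 2 w v) {s : σ}
    (hb : (blockList w).count s ≤ 2) {x y : List σ} (hx : w = x ++ s :: y) :
    ∃ x' y', v = x' ++ s :: y' ∧ x'.length = x.length := by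
  have hcount : w.count s = v.count s := by
    have := wt_eq h s 1 0
    simp only [wt] at this
    omega
  obtain ⟨x₀, y₀, h₀, hc₀⟩ : ∃ x₀ y₀, v = x₀ ++ s :: y₀ ∧ x₀.count s = x.count s := by
    apply exists_occurrence
    rw [← hcount, hx]
    simp
  refine ⟨x₀, y₀, h₀, ?_⟩
  have bx := x.count_le_length (a := s)
  have b0 := x₀.count_le_length (a := s)
  have hxl : x.length ≤ w.length := by rw [hx]; simp
  -- `N` exceeds all values of `C`, so that `G` dominates in `± (C - N * G)`.
  obtain ⟨N, hN⟩ : ∃ N : ℤ, N = w.length + v.length + 1 := ⟨_, rfl⟩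
  rcases min_or_max hb hx with hm | hm
  · obtain ⟨x₁, y₁, h₁, l₁⟩ := exists_wt_le h s 1 (-N) hx
    have b1 := x₁.count_le_length (a := s)
    have hx1 : x₁.length ≤ v.length := by rw [h₁]; simp
    have key : ∀ x' y', v = x' ++ s :: y' →
        (x.length : ℤ) - x.count s ≤ x'.length - x'.count s := by
      intro x' y' h'
      obtain ⟨x₂, y₂, h₂, l₂⟩ := exists_wt_le h.symm' s 0 (-1) h'
      have := hm _ _ h₂
      have := x₂.count_le_length (a := s)
      simp only [wt] at l₂
      omega
    have k0 := key _ _ h₀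
    have k1 := key _ _ h₁
    simp only [wt] at l₁
    have hG : (x₁.length : ℤ) - x₁.count s = x.length - x.count s := by
      by_contra hne
      have h2 : (x.length : ℤ) - x.count s + 1 ≤ x₁.length - x₁.count s := by omega
      have h3 : N * ((x.length : ℤ) - x.count s + 1) ≤ N * (x₁.length - x₁.count s) :=
        mul_le_mul_of_nonneg_left h2 (by omega)
      have : (x₁.count s : ℤ) ≤ v.length := by omega
      have : (0 : ℤ) ≤ x.count s := by omega
      linarith
    have hC : x.count s ≤ x₁.count s := by
      rw [hG] at l₁
      omega
    have := occurrence_mono (h₀.symm.trans h₁) (hc₀.trans_le hC)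
    omega
  · obtain ⟨x₁, y₁, h₁, l₁⟩ := exists_wt_le h s (-1) N hx
    have b1 := x₁.count_le_length (a := s)
    have key : ∀ x' y', v = x' ++ s :: y' →
        (x'.length : ℤ) - x'.count s ≤ x.length - x.count s := by
      intro x' y' h'
      obtain ⟨x₂, y₂, h₂, l₂⟩ := exists_wt_le h.symm' s 0 1 h'
      have := hm _ _ h₂
      have := x₂.count_le_length (a := s)
      have := x'.count_le_length (a := s)
      simp only [wt] at l₂
      omega
    have k0 := key _ _ h₀
    have k1 := key _ _ h₁
    simp only [wt] at l₁
    have hG : (x₁.length : ℤ) - x₁.count s = x.length - x.count s := by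
      by_contra hne
      have h2 : (x₁.length : ℤ) - x₁.count s + 1 ≤ x.length - x.count s := by omega
      have h3 : N * ((x₁.length : ℤ) - x₁.count s + 1) ≤ N * (x.length - x.count s) :=
        mul_le_mul_of_nonneg_left h2 (by omega)
      have : (x.count s : ℤ) ≤ w.length := by omega
      have : (0 : ℤ) ≤ x₁.count s := by omega
      linarith
    have hC : x₁.count s ≤ x.count s := by
      rw [hG] at l₁
      omega
    have := occurrence_mono (h₁.symm.trans h₀) (hC.trans_eq hc₀.symm)
    omega

end Isoterm

/-- If every letter of `w` occurs in at most two distinct blocks, then `w` is an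
isoterm for `UT_2`. -/
theorem isoterm_of_few_blocks {σ : Type*} [Fintype σ] [DecidableEq σ]
    (w : List σ) (hw : w ≠ []) (hblocks : ∀ s : σ, (blockList w).count s ≤ 2)
    (v : List σ) (hv : v ≠ []) (h : UTId 2 w v) : v = w := by
  have hlen : v.length = w.length := by
    have := wt_eq h (w.head hw) 1 1
    simp only [wt] at this
    omega
  apply List.ext_getElem hlen
  intro i hi hi'
  have hsplit : w = w.take i ++ w[i] :: w.drop (i + 1) := by simp
  obtain ⟨x, y, rfl, hx⟩ := occurrence_transfer h (hblocks w[i]) hsplit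
  have hxi : x.length = i := by
    rw [hx, List.length_take]
    omega
  subst hxi
  simp
end
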